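/- Let n ≥ 3 and let 𝔯 ∈ S²_B(⋀²ℝ^{n+1}) be the curvature operator of Sⁿ × ℝ with the standard product metric normalized to unit scalar curvature. Then for every ξ ∈ ⟨W⟩ with ‖ξ‖ = 1, one has ⟨DQ̃(𝔯)(ξ), ξ⟩ = −1/n < 0; in particular every Weyl direction is a stable direction for DQ̃(𝔯). -/

import Mathlib

open scoped BigOperators
open Matrix Filter

noncomputable section

/-- `so n`: the Lie algebra of real skew-symmetric `n × n` matrices, as a submodule of
matrices.  It is the model for `⋀²ℝⁿ` under the identification `x ∧ y ↦ x yᵀ - y xᵀ`,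
i.e. `(x ∧ y)(z) = ⟨y,z⟩x - ⟨x,z⟩y`. -/
def so (n : ℕ) : Submodule ℝ (Matrix (Fin n) (Fin n) ℝ) where
  carrier := {A | Aᵀ = -A}
  add_mem' := fun {a b} ha hb => by
    simp only [Set.mem_setOf_eq] at *
    rw [Matrix.transpose_add, ha, hb, neg_add]
  zero_mem' := by simp
  smul_mem' := fun c {a} ha => by
    simp only [Set.mem_setOf_eq] at *
    rw [Matrix.transpose_smul, ha, smul_neg]

lemma mem_so {n : ℕ} {A : Matrix (Fin n) (Fin n) ℝ} : A ∈ so n ↔ Aᵀ = -A := Iff.rfl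

lemma so_skew {n : ℕ} (X : so n) : (X.1)ᵀ = -X.1 := mem_so.mp X.2

lemma so_skew' {n : ℕ} (X : so n) (i j : Fin n) : X.1 j i = -X.1 i j := by
  have h := congrFun (congrFun (so_skew X) i) j
  simpa [Matrix.transpose_apply] using h

/-- The Lie bracket (matrix commutator) on `so n`. -/
def brkt {n : ℕ} (X Y : so n) : so n :=
  ⟨X.1 * Y.1 - Y.1 * X.1, by
    rw [mem_so, Matrix.transpose_sub, Matrix.transpose_mul, Matrix.transpose_mul,
      so_skew X, so_skew Y]
    simp [neg_sub]⟩

/-- The inner product `⟨A, B⟩ = -(1/2) tr (A B)` on `so n ≅ ⋀²ℝⁿ`, for which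
`{e_i ∧ e_j : i < j}` is orthonormal. -/
def ip {n : ℕ} (X Y : so n) : ℝ := -(1 / 2) * (X.1 * Y.1).trace

/-- `ip X` as a linear functional. -/
def ipL {n : ℕ} (X : so n) : so n →ₗ[ℝ] ℝ where
  toFun Y := ip X Y
  map_add' Y Z := by
    simp [ip, Matrix.mul_add, Matrix.trace_add]
    ring
  map_smul' c Y := by
    simp [ip, Matrix.mul_smul, Matrix.trace_smul]
    ring

/-- The wedge `x ∧ y` of two vectors, as an element of `so n`. -/
def wedgeVec {n : ℕ} (x y : Fin n → ℝ) : so n :=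
  ⟨Matrix.of fun i j => x i * y j - y i * x j, by
    rw [mem_so]
    ext i j
    simp [Matrix.transpose_apply]
    ring⟩

/-- Index set for the standard orthonormal basis `{e_i ∧ e_j : i < j}` of `so n`. -/
def pairs (n : ℕ) : Finset (Fin n × Fin n) := Finset.univ.filter (fun p => p.1 < p.2)

/-- Standard basis vector of `ℝⁿ`. -/
def stdVec {n : ℕ} (i : Fin n) : Fin n → ℝ := Pi.single i 1

/-- The standard orthonormal basis element `e_i ∧ e_j` of `so n`. -/
def omegaB {n : ℕ} (p : Fin n × Fin n) : so n := wedgeVec (stdVec p.1) (stdVec p.2)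

/-- Hamilton's sharp product `A # B` of self-adjoint endomorphisms of `⋀²ℝⁿ ≅ so n`:
`⟨(A # B)(φ), ψ⟩ = (1/2) Σ_{α,β} ⟨[A ω_α, B ω_β], φ⟩ ⟨[ω_α, ω_β], ψ⟩`
over the orthonormal basis `{ω_α} = {e_i ∧ e_j : i < j}`. -/
def sharp {n : ℕ} (A B : Module.End ℝ (so n)) : Module.End ℝ (so n) :=
  (1 / 2 : ℝ) • ∑ p ∈ pairs n, ∑ q ∈ pairs n,
    (ipL (brkt (A (omegaB p)) (B (omegaB q)))).smulRight (brkt (omegaB p) (omegaB q))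

/-- The bilinear map `Q(A,B) = (1/2)(AB + BA) + A # B`. -/
def Qbil {n : ℕ} (A B : Module.End ℝ (so n)) : Module.End ℝ (so n) :=
  (1 / 2 : ℝ) • (A * B + B * A) + sharp A B

/-- `Q(R) = R² + R # R`. -/
def Qop {n : ℕ} (R : Module.End ℝ (so n)) : Module.End ℝ (so n) := R * R + sharp R R

/-- Self-adjointness of an endomorphism of `so n ≅ ⋀²ℝⁿ`. -/
def IsSelfAdjointCO {n : ℕ} (R : Module.End ℝ (so n)) : Prop :=
  ∀ X Y : so n, ip (R X) Y = ip X (R Y)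

/-- The first Bianchi identity. -/
def SatBianchi {n : ℕ} (R : Module.End ℝ (so n)) : Prop :=
  ∀ x y z w : Fin n → ℝ,
    ip (R (wedgeVec x y)) (wedgeVec z w) + ip (R (wedgeVec y z)) (wedgeVec x w)
      + ip (R (wedgeVec z x)) (wedgeVec y w) = 0

/-- Algebraic curvature operators: self-adjoint endomorphisms of `⋀²ℝⁿ` satisfying the
first Bianchi identity.  `IsACO R` says `R ∈ S²_B(⋀²ℝⁿ)`. -/
def IsACO {n : ℕ} (R : Module.End ℝ (so n)) : Prop := IsSelfAdjointCO R ∧ SatBianchi R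

/-- The Ricci tensor of `R`, `Ric(R)_{ij} = Σ_k ⟨R(e_i ∧ e_k), e_j ∧ e_k⟩`. -/
def RicM {n : ℕ} (R : Module.End ℝ (so n)) : Matrix (Fin n) (Fin n) ℝ :=
  Matrix.of fun i j => ∑ k, ip (R (wedgeVec (stdVec i) (stdVec k))) (wedgeVec (stdVec j) (stdVec k))

/-- The scalar curvature `s(R) = tr Ric(R)`. -/
def scal {n : ℕ} (R : Module.End ℝ (so n)) : ℝ := (RicM R).trace

/-- `‖Ric(R)‖² = tr (Ric(R)²)`. -/
def ricNormSq {n : ℕ} (R : Module.End ℝ (so n)) : ℝ := (RicM R * RicM R).trace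

/-- The traceless Ricci tensor `Ric₀(R)`. -/
def Ric0M {n : ℕ} (R : Module.End ℝ (so n)) : Matrix (Fin n) (Fin n) ℝ :=
  RicM R - (scal R / n) • (1 : Matrix (Fin n) (Fin n) ℝ)

/-- `R` is Einstein if `Ric(R)` is a scalar multiple of the identity of `ℝⁿ`. -/
def IsEinstein {n : ℕ} (R : Module.End ℝ (so n)) : Prop :=
  ∃ c : ℝ, RicM R = c • (1 : Matrix (Fin n) (Fin n) ℝ)

lemma wedgeEnd_key {n : ℕ} (A B : Matrix (Fin n) (Fin n) ℝ) (M : so n) :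
    (A * M.1 * Bᵀ + B * M.1 * Aᵀ)ᵀ = -(A * M.1 * Bᵀ + B * M.1 * Aᵀ) := by
  have hM := so_skew M
  rw [Matrix.transpose_add, Matrix.transpose_mul, Matrix.transpose_mul,
    Matrix.transpose_mul, Matrix.transpose_mul, Matrix.transpose_transpose,
    Matrix.transpose_transpose, hM]
  simp only [Matrix.mul_neg, Matrix.neg_mul, Matrix.mul_assoc, neg_add]
  abel

/-- The wedge `A ∧ B` of two endomorphisms of `ℝⁿ`, as an endomorphism of `⋀²ℝⁿ ≅ so n`:
`(A ∧ B)(v ∧ w) = (1/2)(Av ∧ Bw + Bv ∧ Aw)`, i.e. `M ↦ (1/2)(A M Bᵀ + B M Aᵀ)`. -/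
def wedgeEnd {n : ℕ} (A B : Matrix (Fin n) (Fin n) ℝ) : Module.End ℝ (so n) where
  toFun M := ⟨(1 / 2 : ℝ) • (A * M.1 * Bᵀ + B * M.1 * Aᵀ), by
    rw [mem_so, Matrix.transpose_smul, wedgeEnd_key, smul_neg]⟩
  map_add' M N := by
    apply Subtype.ext
    simp [Matrix.mul_add, Matrix.add_mul, smul_add]
    abel
  map_smul' c M := by
    apply Subtype.ext
    simp [Matrix.mul_smul, Matrix.smul_mul, smul_smul, mul_comm]

/-- Inner product `⟨A, B⟩ = tr(A ∘ B)` on endomorphisms of `⋀²ℝⁿ` (the Frobenius inner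
product for self-adjoint operators). -/
def endIP {n : ℕ} (A B : Module.End ℝ (so n)) : ℝ := LinearMap.trace ℝ ↥(so n) (A * B)

/-- Norm of an endomorphism of `⋀²ℝⁿ` induced by `endIP`. -/
def endNorm {n : ℕ} (A : Module.End ℝ (so n)) : ℝ := Real.sqrt (endIP A A)

/-- Huisken's trilinear form `tri(A,B,C) = tr((AB + BA + 2 A#B) ∘ C) = 2⟨Q(A,B), C⟩`. -/
def tri {n : ℕ} (A B C : Module.End ℝ (so n)) : ℝ :=
  LinearMap.trace ℝ ↥(so n) ((A * B + B * A + (2 : ℝ) • sharp A B) * C)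

/-- The identity component `R_I = (s(R)/(n(n-1))) id ∧ id` of a curvature operator. -/
def compI {n : ℕ} (R : Module.End ℝ (so n)) : Module.End ℝ (so n) :=
  (scal R / ((n : ℝ) * ((n : ℝ) - 1))) • 1

/-- The traceless-Ricci component `R_{Ric₀} = (2/(n-2)) Ric₀(R) ∧ id`. -/
def compRic0 {n : ℕ} (R : Module.End ℝ (so n)) : Module.End ℝ (so n) :=
  (2 / ((n : ℝ) - 2)) • wedgeEnd (Ric0M R) 1

/-- The Weyl component `R_W = R - R_I - R_{Ric₀}`. -/
def compW {n : ℕ} (R : Module.End ℝ (so n)) : Module.End ℝ (so n) := R - compI R - compRic0 R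

/-- The derivative `DQ̃(R)` of the normalized vector field
`Q̃(R) = Q(R) - ‖Ric R‖² R` at `R`, applied to `A`:
`DQ̃(R)(A) = 2Q(R,A) - ‖Ric R‖² A - 2 tr(Ric R · Ric A) R`. -/
def DQt {n : ℕ} (R A : Module.End ℝ (so n)) : Module.End ℝ (so n) :=
  (2 : ℝ) • Qbil R A - ricNormSq R • A - (2 * (RicM R * RicM A).trace) • R


/-- The traceless self-adjoint endomorphism `T` of `ℝ^{n+1}` with eigenvalue
`1/(n(n+1))` of multiplicity `n` and `-1/(n+1)` of multiplicity `1`: the traceless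
Ricci tensor of the normalized product metric on `Sⁿ × ℝ`. -/
def sphereT (n : ℕ) : Matrix (Fin (n + 1)) (Fin (n + 1)) ℝ :=
  Matrix.diagonal (fun i => if (i : ℕ) = n then -(1 / ((n : ℝ) + 1))
    else 1 / ((n : ℝ) * ((n : ℝ) + 1)))

/-- The curvature operator of `Sⁿ × ℝ` with the standard product metric normalized to
unit scalar curvature: `𝔯 = (1/(n(n+1))) id ∧ id + (2/(n-1)) T ∧ id`. -/
def sphereR (n : ℕ) : Module.End ℝ (so (n + 1)) :=
  (1 / ((n : ℝ) * ((n : ℝ) + 1))) • (1 : Module.End ℝ (so (n + 1)))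
    + (2 / ((n : ℝ) - 1)) • wedgeEnd (sphereT n) 1

/-! Since `⟨[X, Y], Z⟩` is invariant under cyclic rotation, so is `⟨Q(A, B), C⟩`. The curvature
operator `𝔯` has no Weyl part, that is, `𝔯 = A ∧ id` for some `A`, so
`⟨Q(𝔯, ξ), ξ⟩ = ⟨Q(ξ), A ∧ id⟩` depends only on `Ric(Q(ξ))`. By Hamilton's formula
`Ric(Q(ξ))_{ij} = ∑ Ric(ξ)_{kl} ξ_{ikjl}` this vanishes for Weyl `ξ`, and what remains of
`⟨DQ̃(𝔯)(ξ), ξ⟩` is `-‖Ric(𝔯)‖² ‖ξ‖²`. -/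

section PairSums

variable {n : ℕ}

lemma sum_univ_eq_two_nsmul_sum_pairs {M : Type*} [AddCommMonoid M] (f : Fin n × Fin n → M)
    (hswap : ∀ p, f p.swap = f p) (hdiag : ∀ i, f (i, i) = 0) :
    ∑ p, f p = 2 • ∑ p ∈ pairs n, f p := by
  have hgt : ∑ p with p.2 < p.1, f p = ∑ p ∈ pairs n, f p :=
    Finset.sum_equiv (Equiv.prodComm _ _) (by simp [pairs]) fun p _ => (hswap p).symm
  have hge : ∑ p with ¬p.1 < p.2, f p = ∑ p with p.2 < p.1, f p := by
    refine (Finset.sum_subset (fun p => ?_) fun p hp hp' => ?_).symm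
    · simpa using le_of_lt
    · simp only [Finset.mem_filter_univ, not_lt] at hp hp'
      rw [← Prod.mk.eta (p := p), le_antisymm hp hp', hdiag]
  rw [← Finset.sum_filter_add_sum_filter_not _ (fun p => p.1 < p.2) f, hge, hgt, two_nsmul]
  rfl

end PairSums

section Lambda2

variable {n : ℕ}

lemma omegaB_apply (i j a b : Fin n) :
    (omegaB (i, j)).1 a b = stdVec i a * stdVec j b - stdVec j a * stdVec i b := rfl

lemma sum_stdVec_mul (i : Fin n) (f : Fin n → ℝ) : ∑ a, stdVec i a * f a = f i := by
  simp [stdVec, Pi.single_apply]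

lemma stdVec_comm (i j : Fin n) : stdVec i j = stdVec j i := by
  simp [stdVec, Pi.single_apply, eq_comm]

lemma omegaB_swap (i j : Fin n) : omegaB (j, i) = -omegaB (i, j) := by
  ext a b
  simp only [NegMemClass.coe_neg, Matrix.neg_apply, omegaB_apply]
  ring

lemma ip_comm (X Y : so n) : ip X Y = ip Y X := by
  rw [ip, ip, Matrix.trace_mul_comm]

lemma ip_eq_sum (X Y : so n) : ip X Y = 1 / 2 * ∑ a, ∑ b, X.1 a b * Y.1 a b := by
  have h (a b : Fin n) : X.1 a b * Y.1 b a = -(X.1 a b * Y.1 a b) := by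
    rw [so_skew' Y a b, mul_neg]
  simp only [ip, Matrix.trace, Matrix.diag_apply, Matrix.mul_apply, h, Finset.sum_neg_distrib,
    neg_mul, mul_neg, neg_neg]

lemma ip_omegaB (X : so n) (i j : Fin n) : ip X (omegaB (i, j)) = X.1 i j := by
  have h (a b : Fin n) : X.1 a b * (omegaB (i, j)).1 a b
      = stdVec i a * (stdVec j b * X.1 a b) - stdVec j a * (stdVec i b * X.1 a b) := by
    rw [omegaB_apply]; ring
  simp only [ip_eq_sum, h, Finset.sum_sub_distrib, ← Finset.mul_sum, sum_stdVec_mul]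
  rw [so_skew' X i j]
  ring

lemma sum_ip_omegaB_smul_omegaB (X : so n) :
    ∑ p ∈ pairs n, ip X (omegaB p) • omegaB p = X := by
  have hpairs := sum_univ_eq_two_nsmul_sum_pairs (fun p => ip X (omegaB p) • omegaB p)
    (fun ⟨i, j⟩ => by
      rw [Prod.swap_prod_mk, ip_omegaB, ip_omegaB, omegaB_swap i j, so_skew' X i j, neg_smul_neg])
    (fun i => by rw [ip_omegaB, self_eq_neg.mp (so_skew' X i i), zero_smul])
  have hfull : ∑ p, ip X (omegaB p) • omegaB p = (2 : ℝ) • X := by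
    ext a b
    have h (i j : Fin n) : X.1 i j * (omegaB (i, j)).1 a b
        = stdVec a i * (stdVec b j * X.1 i j) - stdVec b i * (stdVec a j * X.1 i j) := by
      rw [omegaB_apply, stdVec_comm i, stdVec_comm j, stdVec_comm i, stdVec_comm j]; ring
    simp only [Fintype.sum_prod_type, ip_omegaB, AddSubmonoidClass.coe_finsetSum,
      Submodule.coe_smul, Matrix.sum_apply, Matrix.smul_apply, smul_eq_mul, h,
      Finset.sum_sub_distrib, ← Finset.mul_sum, sum_stdVec_mul]
    rw [so_skew' X a b]
    ring
  rw [hfull, ← ofNat_smul_eq_nsmul ℝ] at hpairs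
  exact (smul_right_injective _ (two_ne_zero (α := ℝ)) hpairs).symm

lemma sum_ip_omegaB_mul (X : so n) (f : so n →ₗ[ℝ] ℝ) :
    ∑ p ∈ pairs n, ip X (omegaB p) * f (omegaB p) = f X := by
  conv_rhs => rw [← sum_ip_omegaB_smul_omegaB X]
  simp only [map_sum, map_smul, smul_eq_mul]

lemma trace_eq_sum_pairs (R : Module.End ℝ (so n)) :
    LinearMap.trace ℝ (so n) R = ∑ p ∈ pairs n, ip (R (omegaB p)) (omegaB p) := by
  have h : R = ∑ p ∈ pairs n, (ipL (omegaB p)).smulRight (R (omegaB p)) := by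
    ext1 X
    conv_lhs => rw [← sum_ip_omegaB_smul_omegaB X]
    simp [LinearMap.sum_apply, ipL, ip_comm X]
  conv_lhs => rw [h]
  rw [map_sum]
  exact Finset.sum_congr rfl fun p _ => (LinearMap.trace_smulRight _ _).trans (ip_comm _ _)

lemma ip_brkt_rotate (X Y Z : so n) : ip (brkt X Y) Z = ip (brkt Y Z) X := by
  simp only [ip, brkt, Matrix.sub_mul, Matrix.trace_sub]
  rw [Matrix.trace_mul_cycle Y.1 Z.1, Matrix.trace_mul_cycle Y.1 X.1]

lemma brkt_omegaB (k l : Fin n) (X : so n) :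
    brkt (omegaB (k, l)) X = ∑ m, (X.1 l m • omegaB (k, m) - X.1 k m • omegaB (l, m)) := by
  apply Subtype.ext
  rw [AddSubmonoidClass.coe_finsetSum]
  ext a b
  have hleft (c : Fin n) : (omegaB (k, l)).1 a c * X.1 c b
      = stdVec k a * (stdVec l c * X.1 c b) - stdVec l a * (stdVec k c * X.1 c b) := by
    rw [omegaB_apply]; ring
  have hright (c : Fin n) : X.1 a c * (omegaB (k, l)).1 c b
      = stdVec l b * (stdVec k c * X.1 a c) - stdVec k b * (stdVec l c * X.1 a c) := by
    rw [omegaB_apply]; ring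
  have hsum (c : Fin n) : (X.1 l c • omegaB (k, c) - X.1 k c • omegaB (l, c)).1 a b
      = stdVec k a * (stdVec b c * X.1 l c) - stdVec k b * (stdVec a c * X.1 l c)
        - (stdVec l a * (stdVec b c * X.1 k c) - stdVec l b * (stdVec a c * X.1 k c)) := by
    simp only [AddSubgroupClass.coe_sub, Submodule.coe_smul, Matrix.sub_apply, Matrix.smul_apply,
      smul_eq_mul, omegaB_apply]
    rw [stdVec_comm c a, stdVec_comm c b]
    ring
  simp only [Matrix.sum_apply, hsum]
  simp only [brkt, Matrix.sub_apply, Matrix.mul_apply, hleft, hright, Finset.sum_sub_distrib,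
    ← Finset.mul_sum, sum_stdVec_mul]
  rw [so_skew' X l a, so_skew' X k a]
  ring

end Lambda2

section Sharp

variable {n : ℕ}

lemma trace_sharp_mul (A B C : Module.End ℝ (so n)) :
    LinearMap.trace ℝ (so n) (sharp A B * C) =
      1 / 2 * ∑ p ∈ pairs n, ∑ q ∈ pairs n, ∑ r ∈ pairs n,
        ip (brkt (omegaB p) (omegaB q)) (omegaB r) *
          ip (brkt (A (omegaB p)) (B (omegaB q))) (C (omegaB r)) := by
  have h (f : so n →ₗ[ℝ] ℝ) (v : so n) :
      LinearMap.trace ℝ (so n) ((f.smulRight v : Module.End ℝ (so n)) * C) = f (C v) :=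
    LinearMap.trace_smulRight (f ∘ₗ C) v
  simp only [sharp, smul_mul_assoc, Finset.sum_mul, map_smul, map_sum, h, smul_eq_mul]
  congr 1
  refine Finset.sum_congr rfl fun p _ => Finset.sum_congr rfl fun q _ => ?_
  exact (sum_ip_omegaB_mul (brkt (omegaB p) (omegaB q))
    (ipL (brkt (A (omegaB p)) (B (omegaB q))) ∘ₗ C)).symm

lemma trace_sharp_mul_rotate (A B C : Module.End ℝ (so n)) :
    LinearMap.trace ℝ (so n) (sharp A B * C) = LinearMap.trace ℝ (so n) (sharp B C * A) := by
  have hrotate (p q r : Fin n × Fin n) :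
      ip (brkt (omegaB p) (omegaB q)) (omegaB r) *
          ip (brkt (A (omegaB p)) (B (omegaB q))) (C (omegaB r)) =
        ip (brkt (omegaB q) (omegaB r)) (omegaB p) *
          ip (brkt (B (omegaB q)) (C (omegaB r))) (A (omegaB p)) := by
    rw [ip_brkt_rotate, ip_brkt_rotate (A (omegaB p))]
  simp only [trace_sharp_mul, hrotate]
  rw [← Finset.sum_comm_cycle]

lemma endIP_add_left (A B C : Module.End ℝ (so n)) :
    endIP (A + B) C = endIP A C + endIP B C := by
  rw [endIP, add_mul, map_add, endIP, endIP]

lemma endIP_sub_left (A B C : Module.End ℝ (so n)) :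
    endIP (A - B) C = endIP A C - endIP B C :=
  (congrArg (LinearMap.trace ℝ (so n)) (sub_mul A B C)).trans (map_sub _ _ _)

lemma endIP_smul_left (c : ℝ) (A B : Module.End ℝ (so n)) :
    endIP (c • A) B = c * endIP A B := by
  rw [endIP, smul_mul_assoc, map_smul, smul_eq_mul, endIP]

lemma endIP_Qbil_rotate (A B C : Module.End ℝ (so n)) :
    endIP (Qbil A B) C = endIP (Qbil B C) A := by
  have hleft : endIP (A * B) C = endIP (B * C) A := by
    rw [endIP, mul_assoc, LinearMap.trace_mul_comm, endIP]
  have hright : endIP (B * A) C = endIP (C * B) A := by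
    rw [endIP, LinearMap.trace_mul_comm, ← mul_assoc, endIP]
  have hsharp : endIP (sharp A B) C = endIP (sharp B C) A := trace_sharp_mul_rotate A B C
  simp only [Qbil, endIP_add_left, endIP_smul_left, hleft, hright, hsharp]

lemma Qbil_self (R : Module.End ℝ (so n)) : Qbil R R = Qop R := by
  rw [Qbil, Qop, ← two_smul ℝ (R * R), smul_smul]
  norm_num

lemma ip_sharp (R S : Module.End ℝ (so n)) (φ ψ : so n) :
    ip (sharp R S φ) ψ =
      1 / 2 * ∑ p ∈ pairs n, ip (brkt φ (R (omegaB p))) (S (brkt ψ (omegaB p))) := by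
  have hdef : ip (sharp R S φ) ψ = 1 / 2 * ∑ p ∈ pairs n, ∑ q ∈ pairs n,
      ip (brkt (R (omegaB p)) (S (omegaB q))) φ * ip ψ (brkt (omegaB p) (omegaB q)) := by
    rw [ip_comm]
    change ipL ψ (sharp R S φ) = _
    simp only [sharp, LinearMap.smul_apply, LinearMap.sum_apply, LinearMap.smulRight_apply,
      map_smul, map_sum, smul_eq_mul]
    rfl
  rw [hdef]
  congr 1
  refine Finset.sum_congr rfl fun p _ => ?_
  refine Eq.trans ?_ (sum_ip_omegaB_mul (brkt ψ (omegaB p)) (ipL (brkt φ (R (omegaB p))) ∘ₗ S))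
  refine Finset.sum_congr rfl fun q _ => ?_
  rw [mul_comm, ip_comm ψ, ← ip_brkt_rotate ψ, ← ip_brkt_rotate φ]
  rfl

lemma ip_sharp_omegaB (R S : Module.End ℝ (so n)) (φ : so n) (k l : Fin n) :
    ip (sharp R S φ) (omegaB (k, l)) = 1 / 2 * ∑ m,
      (ip (brkt (R (omegaB (l, m))) (S (omegaB (k, m)))) φ -
        ip (brkt (R (omegaB (k, m))) (S (omegaB (l, m)))) φ) := by
  have hp (p : Fin n × Fin n) :
      ip (brkt φ (R (omegaB p))) (S (brkt (omegaB (k, l)) (omegaB p))) =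
        ∑ m, (ip (omegaB (l, m)) (omegaB p) * ip (brkt (S (omegaB (k, m))) φ) (R (omegaB p)) -
          ip (omegaB (k, m)) (omegaB p) * ip (brkt (S (omegaB (l, m))) φ) (R (omegaB p))) := by
    change (ipL (brkt φ (R (omegaB p))) ∘ₗ S) _ = _
    simp only [brkt_omegaB, map_sum, map_sub, map_smul, smul_eq_mul]
    refine Finset.sum_congr rfl fun m _ => ?_
    rw [← ip_omegaB, ← ip_omegaB, ip_comm (omegaB p), ip_comm (omegaB p), ip_brkt_rotate _ φ,
      ip_brkt_rotate _ φ]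
    rfl
  have hcontract (X Y : so n) :
      ∑ p ∈ pairs n, ip X (omegaB p) * ip (brkt (S Y) φ) (R (omegaB p)) =
        ip (brkt (R X) (S Y)) φ := by
    rw [ip_brkt_rotate]
    exact sum_ip_omegaB_mul X (ipL _ ∘ₗ R)
  simp only [ip_sharp, hp]
  rw [Finset.sum_comm]
  simp only [Finset.sum_sub_distrib, hcontract]

end Sharp

section Curvature

variable {n : ℕ}

/-- The components `R_{ijkl} = ⟨R(e_i ∧ e_j), e_k ∧ e_l⟩` of an endomorphism `R` of `⋀²ℝⁿ`. -/
def curv (R : Module.End ℝ (so n)) (i j k l : Fin n) : ℝ :=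
  ip (R (omegaB (i, j))) (omegaB (k, l))

lemma map_omegaB_apply (R : Module.End ℝ (so n)) (i j k l : Fin n) :
    (R (omegaB (i, j))).1 k l = curv R i j k l :=
  (ip_omegaB _ k l).symm

lemma curv_swap_left (R : Module.End ℝ (so n)) (i j k l : Fin n) :
    curv R j i k l = -curv R i j k l := by
  rw [← map_omegaB_apply, omegaB_swap i j, map_neg, ← map_omegaB_apply]
  rfl

lemma curv_swap_right (R : Module.End ℝ (so n)) (i j k l : Fin n) :
    curv R i j l k = -curv R i j k l := by
  rw [← map_omegaB_apply, ← map_omegaB_apply, so_skew']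

lemma IsSelfAdjointCO.curv_pair_symm {R : Module.End ℝ (so n)} (hR : IsSelfAdjointCO R)
    (i j k l : Fin n) : curv R k l i j = curv R i j k l := by
  rw [curv, curv, hR, ip_comm]

lemma SatBianchi.curv_cyclic {R : Module.End ℝ (so n)} (hR : SatBianchi R) (i j k l : Fin n) :
    curv R i j k l + curv R j k i l + curv R k i j l = 0 :=
  hR (stdVec i) (stdVec j) (stdVec k) (stdVec l)

lemma curv_sharp (R S : Module.End ℝ (so n)) (i j k l : Fin n) :
    curv (sharp R S) i j k l = 1 / 2 * ∑ m, ∑ q,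
      (curv S k m i q * curv R l m j q - curv R l m i q * curv S k m j q
        + curv R k m i q * curv S l m j q - curv S l m i q * curv R k m j q) := by
  have hbrkt (X Y : so n) :
      ip (brkt X Y) (omegaB (i, j)) = ∑ q, (Y.1 i q * X.1 j q - X.1 i q * Y.1 j q) := by
    simp only [ip_omegaB, brkt, Matrix.sub_apply, Matrix.mul_apply, ← Finset.sum_sub_distrib]
    refine Finset.sum_congr rfl fun q _ => ?_
    rw [so_skew' X j q, so_skew' Y j q]
    ring
  rw [curv, ip_sharp_omegaB]
  simp only [hbrkt, map_omegaB_apply, ← Finset.sum_sub_distrib]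
  congr 1
  refine Finset.sum_congr rfl fun m _ => Finset.sum_congr rfl fun q _ => ?_
  ring

lemma IsSelfAdjointCO.curv_mul_self {R : Module.End ℝ (so n)} (hR : IsSelfAdjointCO R)
    (i j k l : Fin n) :
    curv (R * R) i j k l = 1 / 2 * ∑ a, ∑ b, curv R i j a b * curv R k l a b := by
  simp only [← map_omegaB_apply R, ← ip_eq_sum]
  exact hR (R (omegaB (i, j))) (omegaB (k, l))

lemma RicM_apply (R : Module.End ℝ (so n)) (i j : Fin n) : RicM R i j = ∑ k, curv R i k j k :=
  rfl

lemma RicM_add (R S : Module.End ℝ (so n)) : RicM (R + S) = RicM R + RicM S := by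
  ext i j
  simp only [Matrix.add_apply, RicM_apply, ← Finset.sum_add_distrib, ← map_omegaB_apply]
  rfl

lemma IsACO.sum_curv_mul_curv {R : Module.End ℝ (so n)} (hR : IsACO R) (i j : Fin n) :
    ∑ q, ∑ k, ∑ m, curv R i q k m * curv R j m k q =
      1 / 2 * ∑ q, ∑ k, ∑ m, curv R i q k m * curv R j q k m := by
  have hswap : ∑ q, ∑ k, ∑ m, curv R i q k m * curv R j m k q =
      -∑ q, ∑ k, ∑ m, curv R i q k m * curv R j k m q := by
    simp only [← Finset.sum_neg_distrib]
    refine Finset.sum_congr rfl fun q _ => ?_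
    rw [Finset.sum_comm]
    refine Finset.sum_congr rfl fun k _ => Finset.sum_congr rfl fun m _ => ?_
    rw [curv_swap_right R i q k m, neg_mul]
  -- Antisymmetrizing the second factor in `k, m` allows the Bianchi identity to be applied.
  have hbianchi (q k m : Fin n) : curv R j m k q - curv R j k m q = curv R j q k m := by
    linarith [hR.2.curv_cyclic j m k q, curv_swap_left R j k m q, curv_swap_left R k m j q,
      hR.1.curv_pair_symm j q k m]
  have hdiff : ∑ q, ∑ k, ∑ m, curv R i q k m * curv R j m k q
      - ∑ q, ∑ k, ∑ m, curv R i q k m * curv R j k m q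
      = ∑ q, ∑ k, ∑ m, curv R i q k m * curv R j q k m := by
    simp only [← Finset.sum_sub_distrib, ← mul_sub, hbianchi]
  linarith

lemma IsSelfAdjointCO.RicM_sharp_self {R : Module.End ℝ (so n)} (hR : IsSelfAdjointCO R)
    (i j : Fin n) :
    RicM (sharp R R) i j =
      ∑ k, ∑ l, RicM R k l * curv R i k j l - ∑ q, ∑ k, ∑ m, curv R i q k m * curv R j m k q := by
  have hcurv (k m q : Fin n) :
      1 / 2 * (curv R j m i q * curv R k m k q - curv R k m i q * curv R j m k q
        + curv R j m i q * curv R k m k q - curv R k m i q * curv R j m k q) =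
      curv R q k m k * curv R i q j m - curv R i q k m * curv R j m k q := by
    rw [← hR.curv_pair_symm j m i q, ← hR.curv_pair_symm k m i q, ← hR.curv_pair_symm k m k q,
      curv_swap_left R q k k m, curv_swap_right R q k m k]
    ring
  have hRic : ∑ k, ∑ m, ∑ q, curv R q k m k * curv R i q j m =
      ∑ q, ∑ m, RicM R q m * curv R i q j m := by
    simp only [RicM_apply, Finset.sum_mul]
    rw [Finset.sum_comm_cycle]
    exact Finset.sum_congr rfl fun q _ => Finset.sum_comm
  rw [← hRic, ← Finset.sum_comm_cycle (f := fun k m q => curv R i q k m * curv R j m k q)]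
  simp only [RicM_apply, curv_sharp, Finset.mul_sum, hcurv]
  simp only [Finset.sum_sub_distrib]

lemma IsACO.RicM_Qop_apply {R : Module.End ℝ (so n)} (hR : IsACO R) (i j : Fin n) :
    RicM (Qop R) i j = ∑ k, ∑ l, RicM R k l * curv R i k j l := by
  have hsq : RicM (R * R) i j = 1 / 2 * ∑ q, ∑ k, ∑ m, curv R i q k m * curv R j q k m := by
    simp only [RicM_apply, hR.1.curv_mul_self, ← Finset.mul_sum]
  rw [Qop, RicM_add, Matrix.add_apply, hsq, hR.1.RicM_sharp_self, hR.sum_curv_mul_curv]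
  ring

lemma IsACO.RicM_Qop_eq_zero {R : Module.End ℝ (so n)} (hR : IsACO R) (hRic : RicM R = 0) :
    RicM (Qop R) = 0 := by
  ext i j
  simp [hR.RicM_Qop_apply, hRic]

end Curvature

section WedgeOne

variable {n : ℕ}

lemma trace_eq_half_sum_curv (R : Module.End ℝ (so n)) :
    LinearMap.trace ℝ (so n) R = 1 / 2 * ∑ i, ∑ j, curv R i j i j := by
  have h := sum_univ_eq_two_nsmul_sum_pairs (fun p => ip (R (omegaB p)) (omegaB p))
    (fun ⟨i, j⟩ => by
      change curv R j i j i = curv R i j i j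
      rw [curv_swap_left, curv_swap_right, neg_neg])
    (fun i => self_eq_neg.mp (curv_swap_right R i i i i))
  rw [Fintype.sum_prod_type, ← trace_eq_sum_pairs, two_nsmul] at h
  simp only [curv]
  linarith

lemma wedgeEnd_one_apply (A : Matrix (Fin n) (Fin n) ℝ) (X : so n) (i j : Fin n) :
    (wedgeEnd A 1 X).1 i j = 1 / 2 * ∑ k, (A i k * X.1 k j + A j k * X.1 i k) := by
  simp [wedgeEnd, Matrix.mul_apply, Finset.sum_add_distrib, mul_add, mul_comm]

lemma smul_one_add_smul_wedgeEnd_one (a b : ℝ) (A : Matrix (Fin n) (Fin n) ℝ) :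
    a • (1 : Module.End ℝ (so n)) + b • wedgeEnd A 1 = wedgeEnd (a • 1 + b • A) 1 := by
  ext X i j
  simp only [wedgeEnd, LinearMap.add_apply, LinearMap.smul_apply, Module.End.one_apply,
    LinearMap.coe_mk, AddHom.coe_mk, Submodule.coe_add, Submodule.coe_smul, Matrix.transpose_add,
    Matrix.transpose_smul, Matrix.transpose_one, Matrix.add_mul, Matrix.mul_add, Matrix.smul_mul,
    Matrix.mul_smul, Matrix.one_mul, Matrix.mul_one, Matrix.add_apply, Matrix.smul_apply,
    smul_eq_mul]
  ring

lemma endIP_wedgeEnd_one (R : Module.End ℝ (so n)) (A : Matrix (Fin n) (Fin n) ℝ) :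
    endIP R (wedgeEnd A 1) = 1 / 2 * (A * (RicM R)ᵀ).trace := by
  have hcurv (i j : Fin n) : curv (wedgeEnd A 1 * R) i j i j =
      1 / 2 * ∑ k, (A i k * curv R i j k j + A j k * curv R i j i k) := by
    simp only [← map_omegaB_apply]
    exact wedgeEnd_one_apply A (R (omegaB (i, j))) i j
  have hRic : ∑ i, ∑ j, ∑ k, A i k * curv R i j k j = (A * (RicM R)ᵀ).trace := by
    simp only [Matrix.trace, Matrix.diag_apply, Matrix.mul_apply, Matrix.transpose_apply,
      RicM_apply, Finset.mul_sum]
    exact Finset.sum_congr rfl fun i _ => Finset.sum_comm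
  have hRic' : ∑ i, ∑ j, ∑ k, A j k * curv R i j i k = (A * (RicM R)ᵀ).trace := by
    rw [← hRic, Finset.sum_comm]
    refine Finset.sum_congr rfl fun i _ => Finset.sum_congr rfl fun j _ =>
      Finset.sum_congr rfl fun k _ => ?_
    rw [curv_swap_left, curv_swap_right, neg_neg]
  rw [endIP, LinearMap.trace_mul_comm, trace_eq_half_sum_curv]
  simp only [hcurv, ← Finset.mul_sum, Finset.sum_add_distrib, hRic, hRic']
  ring

lemma RicM_wedgeEnd_one (A : Matrix (Fin n) (Fin n) ℝ) :
    RicM (wedgeEnd A 1) = (1 / 2 : ℝ) • (((n : ℝ) - 2) • Aᵀ + A.trace • 1) := by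
  ext i j
  have hcurv (k : Fin n) : curv (wedgeEnd A 1) i k j k =
      1 / 2 * ((A j i - stdVec i k * A j k) + (stdVec i j * A k k - stdVec j k * A k i)) := by
    have h (m : Fin n) : A j m * (omegaB (i, k)).1 m k + A k m * (omegaB (i, k)).1 j m =
        stdVec i m * A j m - stdVec k m * (stdVec i k * A j m)
          + (stdVec k m * (stdVec i j * A k m) - stdVec i m * (stdVec k j * A k m)) := by
      have hk : stdVec k k = (1 : ℝ) := by simp [stdVec]
      rw [omegaB_apply, omegaB_apply, hk]
      ring
    rw [← map_omegaB_apply, wedgeEnd_one_apply]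
    simp only [h, Finset.sum_sub_distrib, Finset.sum_add_distrib, sum_stdVec_mul]
    rw [stdVec_comm k j]
  have hone : (1 : Matrix (Fin n) (Fin n) ℝ) i j = stdVec i j := by
    rw [stdVec, ← Matrix.one_eq_pi_single]
  simp only [RicM_apply, hcurv, ← Finset.mul_sum, Finset.sum_add_distrib, Finset.sum_sub_distrib,
    sum_stdVec_mul, Matrix.smul_apply, Matrix.add_apply, Matrix.transpose_apply, smul_eq_mul, hone,
    Matrix.trace, Matrix.diag_apply, Finset.sum_const, Finset.card_univ, Fintype.card_fin,
    nsmul_eq_mul]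
  ring

theorem stmt5_general (A : Matrix (Fin n) (Fin n) ℝ) {ξ : Module.End ℝ (so n)} (hξ : IsACO ξ)
    (hRic : RicM ξ = 0) :
    endIP (DQt (wedgeEnd A 1) ξ) ξ = -(ricNormSq (wedgeEnd A 1) * endIP ξ ξ) := by
  have hQ : endIP (Qbil (wedgeEnd A 1) ξ) ξ = 0 := by
    rw [endIP_Qbil_rotate, Qbil_self, endIP_wedgeEnd_one, hξ.RicM_Qop_eq_zero hRic,
      Matrix.transpose_zero, Matrix.mul_zero, Matrix.trace_zero, mul_zero]
  rw [DQt, endIP_sub_left, endIP_sub_left, endIP_smul_left, endIP_smul_left, endIP_smul_left, hQ,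
    hRic, Matrix.mul_zero, Matrix.trace_zero]
  ring

end WedgeOne

section Sphere

lemma sphereR_eq_wedgeEnd_one (n : ℕ) :
    sphereR n = wedgeEnd ((1 / ((n : ℝ) * ((n : ℝ) + 1))) • (1 : Matrix _ _ ℝ)
      + (2 / ((n : ℝ) - 1)) • sphereT n) 1 :=
  smul_one_add_smul_wedgeEnd_one _ _ _

lemma trace_sphereT {n : ℕ} (hn : n ≠ 0) : (sphereT n).trace = 0 := by
  rw [sphereT, Matrix.trace_diagonal, Fin.sum_univ_castSucc]
  simp only [Fin.val_castSucc, (Fin.is_lt _).ne, ↓reduceIte, Fin.val_last, Finset.sum_const,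
    Finset.card_univ, Fintype.card_fin, nsmul_eq_mul]
  field_simp
  norm_num

lemma RicM_sphereR {n : ℕ} (hn : 2 ≤ n) :
    RicM (sphereR n) =
      Matrix.diagonal fun i : Fin (n + 1) => if (i : ℕ) = n then 0 else 1 / (n : ℝ) := by
  have hn' : (2 : ℝ) ≤ n := by exact_mod_cast hn
  have hn1 : (n : ℝ) - 1 ≠ 0 := by linarith
  have hT : (sphereT n)ᵀ = sphereT n := Matrix.diagonal_transpose _
  rw [sphereR_eq_wedgeEnd_one, RicM_wedgeEnd_one, Matrix.trace_add, Matrix.trace_smul,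
    Matrix.trace_smul, trace_sphereT (by lia), Matrix.trace_one, Fintype.card_fin,
    Matrix.transpose_add, Matrix.transpose_smul, Matrix.transpose_smul, Matrix.transpose_one, hT]
  ext i j
  rcases eq_or_ne i j with rfl | hij
  · simp only [sphereT, Matrix.smul_apply, Matrix.add_apply, Matrix.one_apply_eq,
      Matrix.diagonal_apply_eq, smul_eq_mul, Nat.cast_add, Nat.cast_one]
    split_ifs <;> field_simp <;> ring
  · simp [sphereT, hij]

lemma ricNormSq_sphereR {n : ℕ} (hn : 2 ≤ n) : ricNormSq (sphereR n) = 1 / n := by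
  rw [ricNormSq, RicM_sphereR hn, Matrix.diagonal_mul_diagonal, Matrix.trace_diagonal,
    Fin.sum_univ_castSucc]
  simp only [Fin.val_castSucc, (Fin.is_lt _).ne, ↓reduceIte, Fin.val_last, Finset.sum_const,
    Finset.card_univ, Fintype.card_fin, nsmul_eq_mul, mul_zero, add_zero]
  field_simp

end Sphere

/-- For `n ≥ 3` and `𝔯` the curvature operator of the normalized
`Sⁿ × ℝ`, every unit Weyl direction `ξ ∈ ⟨W⟩` satisfies
`⟨DQ̃(𝔯)(ξ), ξ⟩ = -1/n < 0`; i.e. every Weyl direction is a stable direction. -/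
theorem stmt5 (n : ℕ) (hn : 3 ≤ n) (ξ : Module.End ℝ (so (n + 1)))
    (hξACO : IsACO ξ) (hξW : RicM ξ = 0) (hξunit : endIP ξ ξ = 1) :
    endIP (DQt (sphereR n) ξ) ξ = -(1 / (n : ℝ)) ∧
    endIP (DQt (sphereR n) ξ) ξ < 0 := by
  have h : endIP (DQt (sphereR n) ξ) ξ = -(1 / (n : ℝ)) := by
    rw [sphereR_eq_wedgeEnd_one, stmt5_general _ hξACO hξW, ← sphereR_eq_wedgeEnd_one,
      ricNormSq_sphereR (by lia), hξunit, mul_one]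
  exact ⟨h, h ▸ neg_neg_of_pos (by positivity)⟩

end
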